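/- Let (ρ, u) be a smooth solution of (QNS_ε) on (0,T) × T^d. Then for every t ∈ (0,T): (d/dt) ∫_{T^d} [ ρ|u|²/2 + ρ^γ/(γ−1) + f_ε(ρ) + 2κ² |h_ε'(ρ) ∇√ρ|² ] dx + 2ν ∫_{T^d} h_ε(ρ) |Du|² dx + 2ν ∫_{T^d} g_ε(ρ) (div u)² dx + ∫_{T^d} p̃_ε(ρ) |u|² dx = 0. -/

import Mathlib

open MeasureTheory Real

noncomputable section

/-- Partial derivative of a scalar field in the coordinate direction `i`. -/
def pd {d : ℕ} (i : Fin d) (f : (Fin d → ℝ) → ℝ) (x : Fin d → ℝ) : ℝ :=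
  fderiv ℝ f x (Pi.single i 1)

/-- Gradient of a scalar field. -/
def grad {d : ℕ} (f : (Fin d → ℝ) → ℝ) (x : Fin d → ℝ) : Fin d → ℝ :=
  fun i => pd i f x

/-- Divergence of a vector field. -/
def dvg {d : ℕ} (u : (Fin d → ℝ) → (Fin d → ℝ)) (x : Fin d → ℝ) : ℝ :=
  ∑ i, pd i (fun y => u y i) x

/-- Row-wise divergence of a matrix field: `(dvgM M x) i = ∑ j, ∂_j M_{ij}`. -/
def dvgM {d : ℕ} (M : (Fin d → ℝ) → Fin d → Fin d → ℝ) (x : Fin d → ℝ) : Fin d → ℝ :=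
  fun i => ∑ j, pd j (fun y => M y i j) x

/-- Hessian of a scalar field. -/
def hess {d : ℕ} (f : (Fin d → ℝ) → ℝ) (x : Fin d → ℝ) : Fin d → Fin d → ℝ :=
  fun i j => pd i (fun y => pd j f y) x

/-- Laplacian of a scalar field. -/
def lap {d : ℕ} (f : (Fin d → ℝ) → ℝ) (x : Fin d → ℝ) : ℝ :=
  ∑ i, pd i (fun y => pd i f y) x

/-- Jacobian matrix of a vector field: `(jac u x) i j = ∂_j u_i`. -/
def jac {d : ℕ} (u : (Fin d → ℝ) → (Fin d → ℝ)) (x : Fin d → ℝ) : Fin d → Fin d → ℝ :=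
  fun i j => pd j (fun y => u y i) x

/-- Symmetric part of the gradient of a vector field, `Du = (∇u + (∇u)ᵀ)/2`. -/
def symD {d : ℕ} (u : (Fin d → ℝ) → (Fin d → ℝ)) (x : Fin d → ℝ) : Fin d → Fin d → ℝ :=
  fun i j => (jac u x i j + jac u x j i) / 2

/-- Antisymmetric part of the gradient of a vector field, `Au = (∇u − (∇u)ᵀ)/2`. -/
def antiD {d : ℕ} (u : (Fin d → ℝ) → (Fin d → ℝ)) (x : Fin d → ℝ) : Fin d → Fin d → ℝ :=
  fun i j => (jac u x i j - jac u x j i) / 2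

/-- Tensor product of two vectors: `(a ⊗ b)_{ij} = a_i b_j`. -/
def tens {d : ℕ} (a b : Fin d → ℝ) : Fin d → Fin d → ℝ := fun i j => a i * b j

/-- ℤ^d-periodicity: a function of this kind descends to the torus `T^d = ℝ^d/ℤ^d`. -/
def SpacePeriodic {d : ℕ} {E : Type*} (f : (Fin d → ℝ) → E) : Prop :=
  ∀ x : Fin d → ℝ, ∀ n : Fin d → ℤ, f (x + fun i => (n i : ℝ)) = f x

/-- Fundamental domain of the torus `T^d = ℝ^d/ℤ^d` (with its probability Lebesgue measure). -/
def unitBox (d : ℕ) : Set (Fin d → ℝ) := Set.Icc 0 1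

/-- The approximating viscosity coefficient `h_ε(r) = r + ε r^{7/8} + ε r^γ`. -/
def hfun (ε γ r : ℝ) : ℝ := r + ε * r ^ ((7 : ℝ) / 8) + ε * r ^ γ

/-- `g_ε(r) = r h_ε'(r) − h_ε(r)`. -/
def gfun (ε γ r : ℝ) : ℝ := r * deriv (hfun ε γ) r - hfun ε γ r

/-- `λ(ε) = e^{−1/ε⁴}`. -/
def lamfun (ε : ℝ) : ℝ := Real.exp (-1 / ε ^ 4)

/-- The damping coefficient `p̃_ε(r) = λ(ε)(r^{1/ε²} + r^{−1/ε²})`. -/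
def ptil (ε r : ℝ) : ℝ := lamfun ε * (r ^ (1 / ε ^ 2) + r ^ (-(1 / ε ^ 2)))

/-- `μ = ν − √(ν² − κ²)`. -/
def muof (ν κ : ℝ) : ℝ := ν - Real.sqrt (ν ^ 2 - κ ^ 2)

/-- `p_ε` is an antiderivative on `(0,∞)` of `r ↦ μ p̃_ε(r) h_ε'(r) / r`. -/
def IsPeps (ε γ ν κ : ℝ) (P : ℝ → ℝ) : Prop :=
  ∀ r : ℝ, 0 < r → HasDerivAt P (muof ν κ * ptil ε r * deriv (hfun ε γ) r / r) r

/-- `φ_ε` is a smooth function on `(0,∞)` with `r φ_ε'(r) = h_ε'(r)`. -/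
def IsPhieps (ε γ : ℝ) (Φ : ℝ → ℝ) : Prop :=
  ContDiffOn ℝ (⊤ : ℕ∞) Φ (Set.Ioi 0) ∧ ∀ r : ℝ, 0 < r → r * deriv Φ r = deriv (hfun ε γ) r

/-- `f_ε` satisfies `r f_ε'(r) − f_ε(r) = p_ε(r)` on `(0,∞)`. -/
def IsFeps (P F : ℝ → ℝ) : Prop :=
  (∀ r : ℝ, 0 < r → DifferentiableAt ℝ F r) ∧
  ∀ r : ℝ, 0 < r → r * deriv F r - F r = P r

/-- The vector field `∇( h_ε'(ρ) div(h_ε'(ρ) ∇√ρ) / √ρ )`; the capillarity term of (QNS_ε) is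
`2 κ² ρ` times this field. -/
def Kvec {d : ℕ} (ε γ : ℝ) (ρ : (Fin d → ℝ) → ℝ) (x : Fin d → ℝ) : Fin d → ℝ :=
  grad (fun y => deriv (hfun ε γ) (ρ y) *
      dvg (fun z => deriv (hfun ε γ) (ρ z) • grad (fun w => Real.sqrt (ρ w)) z) y /
      Real.sqrt (ρ y)) x

/-- A smooth solution of the approximating system (QNS_ε) on `(0,T) × T^d`:
a pair of `C^∞` functions on `[0,T] × T^d` with `ρ > 0` everywhere, satisfying the continuity
equation and the momentum equation pointwise. -/
def IsQNSSol (d : ℕ) (ε γ ν κ T : ℝ) (P : ℝ → ℝ)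
    (ρ : ℝ → (Fin d → ℝ) → ℝ) (u : ℝ → (Fin d → ℝ) → (Fin d → ℝ)) : Prop :=
  ContDiffOn ℝ (⊤ : ℕ∞) (fun p : ℝ × (Fin d → ℝ) => ρ p.1 p.2) (Set.Icc 0 T ×ˢ Set.univ) ∧
  ContDiffOn ℝ (⊤ : ℕ∞) (fun p : ℝ × (Fin d → ℝ) => u p.1 p.2) (Set.Icc 0 T ×ˢ Set.univ) ∧
  (∀ t x, 0 < ρ t x) ∧
  (∀ t, SpacePeriodic (ρ t)) ∧
  (∀ t, SpacePeriodic (u t)) ∧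
  (∀ t ∈ Set.Ioo 0 T, ∀ x : Fin d → ℝ,
    deriv (fun s => ρ s x) t + dvg (fun y => ρ t y • u t y) x = 0) ∧
  (∀ t ∈ Set.Ioo 0 T, ∀ x : Fin d → ℝ, ∀ i : Fin d,
    deriv (fun s => ρ s x * u s x i) t
      + dvgM (fun y i' j => ρ t y * u t y i' * u t y j) x i
      + grad (fun y => ρ t y ^ γ + P (ρ t y)) x i
      + ptil ε (ρ t x) * u t x i
    = 2 * ν * dvgM (fun y i' j => hfun ε γ (ρ t y) * symD (u t) y i' j) x i
      + 2 * ν * grad (fun y => gfun ε γ (ρ t y) * dvg (u t) y) x i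
      + 2 * κ ^ 2 * ρ t x * Kvec ε γ (ρ t) x i)

/-!
The momentum equation is tested against `u`. By the continuity equation, convection supplies
exactly the difference between `d/dt ∫ ρ|u|²/2` and `∫ u · ∂ₜ(ρu)`, and the pressure
`p = ρ e'(ρ) - e(ρ)` supplies `d/dt ∫ e(ρ)`. For the capillary term, `Q = k(ρ) ∇√ρ` is the
gradient of a function of `ρ`, so that `∂ₜQ = ∇(k(ρ) ∂ₜρ / (2√ρ))`; integrating by parts,
`d/dt ∫ |Q|² = -∫ K ∂ₜρ` with `K = k(ρ) div Q / √ρ`, whereas testing the force `ρ ∇K` against `u`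
gives `-∫ K div(ρu) = ∫ K ∂ₜρ`. Only the viscous and damping terms remain.
-/

open scoped ContDiff

section VectorCalculus

variable {d : ℕ} {f g : (Fin d → ℝ) → ℝ} {V : (Fin d → ℝ) → Fin d → ℝ} {x : Fin d → ℝ}

lemma pd_mul (hf : DifferentiableAt ℝ f x) (hg : DifferentiableAt ℝ g x) (i : Fin d) :
    pd i (fun y => f y * g y) x = pd i f x * g x + f x * pd i g x := by
  simp only [pd, fderiv_fun_mul hf hg, add_apply, smul_apply, smul_eq_mul]
  ring

lemma pd_comp {φ : ℝ → ℝ} (hφ : DifferentiableAt ℝ φ (f x)) (hf : DifferentiableAt ℝ f x)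
    (i : Fin d) : pd i (fun y => φ (f y)) x = deriv φ (f x) * pd i f x :=
  DFunLike.congr_fun (hφ.hasDerivAt.comp_hasFDerivAt x hf.hasFDerivAt).fderiv _

lemma grad_sum_sq (hV : DifferentiableAt ℝ V x) (j : Fin d) :
    grad (fun y => ∑ i, V y i ^ 2) x j = 2 * ∑ i, V x i * jac V x i j := by
  have hVi := differentiableAt_pi.1 hV
  rw [grad, pd, fderiv_fun_sum fun i _ => (hVi i).fun_pow 2, sum_apply, Finset.mul_sum]
  refine Finset.sum_congr rfl fun i _ => ?_
  simp [fderiv_fun_pow 2 (hVi i), jac, pd, mul_assoc]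

lemma dvg_smul (hf : DifferentiableAt ℝ f x) (hV : DifferentiableAt ℝ V x) :
    dvg (fun y => f y • V y) x = ∑ i, V x i * grad f x i + f x * dvg V x := by
  simp only [dvg, Pi.smul_apply, smul_eq_mul, pd_mul hf (differentiableAt_pi.1 hV _),
    Finset.sum_add_distrib, Finset.mul_sum, grad, mul_comm (V x _)]

lemma sum_jac_mul_symD (V : (Fin d → ℝ) → Fin d → ℝ) (x : Fin d → ℝ) :
    ∑ i, ∑ j, jac V x i j * symD V x i j = ∑ i, ∑ j, symD V x i j ^ 2 := by
  have symm : ∑ i, ∑ j, jac V x j i * symD V x i j = ∑ i, ∑ j, jac V x i j * symD V x i j := by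
    rw [Finset.sum_comm]
    simp only [symD, add_comm]
  have split : ∑ i, ∑ j, symD V x i j ^ 2 = (∑ i, ∑ j, jac V x i j * symD V x i j
      + ∑ i, ∑ j, jac V x j i * symD V x i j) / 2 := by
    simp only [← Finset.sum_add_distrib, Finset.sum_div]
    refine Finset.sum_congr rfl fun i _ => Finset.sum_congr rfl fun j _ => ?_
    simp only [symD]
    ring
  linarith

protected lemma SpacePeriodic.pd (hf : SpacePeriodic f) (i : Fin d) : SpacePeriodic (pd i f) := by
  intro x n
  have translate : (fun y => f (y + fun j => (n j : ℝ))) = f := funext fun y => hf y n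
  rw [pd, ← fderiv_comp_add_right, translate]
  rfl

end VectorCalculus

section Torus

variable {d : ℕ} {E : Type*} [NormedAddCommGroup E] [NormedSpace ℝ E]

/-- A continuously differentiable function on the torus, encoded as a periodic function
on `ℝ^d`. -/
structure TorusC1 (f : (Fin d → ℝ) → E) : Prop where
  contDiff : ContDiff ℝ 1 f
  periodic : SpacePeriodic f

lemma integrableOn_unitBox {f : (Fin d → ℝ) → ℝ} (hf : Continuous f) :
    IntegrableOn f (unitBox d) :=
  hf.continuousOn.integrableOn_compact isCompact_Icc

namespace TorusC1

variable {f g : (Fin d → ℝ) → ℝ} {V : (Fin d → ℝ) → Fin d → ℝ}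

lemma apply {ι : Type*} [Fintype ι] {W : (Fin d → ℝ) → ι → E} (hW : TorusC1 W) (i : ι) :
    TorusC1 fun x => W x i :=
  ⟨contDiff_pi.1 hW.contDiff i, fun x n => congrFun (hW.periodic x n) i⟩

lemma pi {ι : Type*} [Fintype ι] {W : (Fin d → ℝ) → ι → E} (hW : ∀ i, TorusC1 fun x => W x i) :
    TorusC1 W :=
  ⟨contDiff_pi.2 fun i => (hW i).contDiff, fun x n => funext fun i => (hW i).periodic x n⟩

lemma smul {F : (Fin d → ℝ) → E} (hf : TorusC1 f) (hF : TorusC1 F) :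
    TorusC1 fun x => f x • F x :=
  ⟨hf.contDiff.smul hF.contDiff, fun x n => by simp only [hf.periodic x n, hF.periodic x n]⟩

lemma mul (hf : TorusC1 f) (hg : TorusC1 g) : TorusC1 fun x => f x * g x :=
  hf.smul hg

lemma sum {ι : Type*} {s : Finset ι} {F : ι → (Fin d → ℝ) → E} (hF : ∀ i ∈ s, TorusC1 (F i)) :
    TorusC1 fun x => ∑ i ∈ s, F i x :=
  ⟨ContDiff.sum fun i hi => (hF i hi).contDiff,
    fun x n => Finset.sum_congr rfl fun i hi => (hF i hi).periodic x n⟩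

lemma comp {φ : ℝ → ℝ} (hφ : ContDiffOn ℝ 1 φ (Set.Ioi 0)) (hf : TorusC1 f)
    (hpos : ∀ x, 0 < f x) : TorusC1 fun x => φ (f x) :=
  ⟨hφ.comp_contDiff hf.contDiff hpos, fun x n => by simp only [hf.periodic x n]⟩

lemma momentumFlux (hf : TorusC1 f) (hV : TorusC1 V) :
    TorusC1 fun x i j => f x * V x i * V x j :=
  pi fun i => pi fun j => (hf.mul (hV.apply i)).mul (hV.apply j)

lemma continuous {F : (Fin d → ℝ) → E} (hF : TorusC1 F) : Continuous F :=
  hF.contDiff.continuous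

lemma differentiableAt {F : (Fin d → ℝ) → E} (hF : TorusC1 F) (x : Fin d → ℝ) :
    DifferentiableAt ℝ F x :=
  hF.contDiff.differentiable one_ne_zero x

lemma continuous_pd (hf : TorusC1 f) (i : Fin d) : Continuous (pd i f) :=
  (hf.contDiff.continuous_fderiv one_ne_zero).clm_apply continuous_const

lemma continuous_dvg (hV : TorusC1 V) : Continuous (dvg V) :=
  continuous_finsetSum _ fun i _ => (hV.apply i).continuous_pd i

lemma continuous_sum_mul_grad (hV : TorusC1 V) (hf : TorusC1 f) :
    Continuous fun x => ∑ i, V x i * grad f x i :=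
  continuous_finsetSum _ fun i _ => (hV.apply i).continuous.mul (hf.continuous_pd i)

lemma continuous_sum_mul_dvgM {M : (Fin d → ℝ) → Fin d → Fin d → ℝ} (hV : TorusC1 V)
    (hM : TorusC1 M) : Continuous fun x => ∑ i, V x i * dvgM M x i :=
  continuous_finsetSum _ fun i _ => (hV.apply i).continuous.mul (hM.apply i).continuous_dvg

lemma integral_dvg_eq_zero (hV : TorusC1 V) : ∫ x in unitBox d, dvg V x = 0 := by
  rcases d with _ | n
  · simp [dvg]
  have divergence_theorem := integral_divergence_of_hasFDerivAt_off_countable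
    (0 : Fin (n + 1) → ℝ) 1 zero_le_one V (fderiv ℝ V) ∅ Set.countable_empty
    hV.continuous.continuousOn (fun x _ => (hV.differentiableAt x).hasFDerivAt)
  have integrand_eq : ∀ x, ∑ i, fderiv ℝ V x (Pi.single i 1) i = dvg V x := fun x =>
    Finset.sum_congr rfl fun i _ => by
      rw [pd, fderiv_pi fun j => (hV.apply j).differentiableAt x]
      rfl
  simp only [integrand_eq] at divergence_theorem
  rw [unitBox, divergence_theorem (integrableOn_unitBox hV.continuous_dvg)]
  refine Finset.sum_eq_zero fun i _ => sub_eq_zero.2 ?_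
  congr 1 with y
  have face : i.insertNth (1 : ℝ) y = i.insertNth (0 : ℝ) y
      + fun j => ((Pi.single i 1 : Fin (n + 1) → ℤ) j : ℝ) := by
    refine funext <| Fin.succAboveCases i ?_ fun j => ?_ <;> simp
  exact (congrArg (V · i) face).trans ((hV.apply i).periodic _ _)

lemma integral_sum_mul_grad (hV : TorusC1 V) (hf : TorusC1 f) :
    ∫ x in unitBox d, ∑ i, V x i * grad f x i = -∫ x in unitBox d, f x * dvg V x := by
  have h := (hf.smul hV).integral_dvg_eq_zero
  simp only [dvg_smul (hf.differentiableAt _) (hV.differentiableAt _)] at h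
  rw [integral_add] at h
  · exact eq_neg_of_add_eq_zero_left h
  · exact integrableOn_unitBox (hV.continuous_sum_mul_grad hf)
  · exact integrableOn_unitBox (hf.continuous.mul hV.continuous_dvg)

lemma integral_sum_mul_dvgM {M : (Fin d → ℝ) → Fin d → Fin d → ℝ} (hV : TorusC1 V)
    (hM : TorusC1 M) :
    ∫ x in unitBox d, ∑ i, V x i * dvgM M x i
      = -∫ x in unitBox d, ∑ i, ∑ j, jac V x i j * M x i j := by
  have row (i : Fin d) : ∫ x in unitBox d, ∑ j, jac V x i j * M x i j
      = -∫ x in unitBox d, V x i * dvgM M x i := by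
    simp only [mul_comm (jac V _ i _)]
    exact (hM.apply i).integral_sum_mul_grad (hV.apply i)
  rw [integral_finsetSum, integral_finsetSum]
  · simp only [row, Finset.sum_neg_distrib, neg_neg]
  · refine fun i _ => integrableOn_unitBox (continuous_finsetSum _ fun j _ => ?_)
    exact ((hV.apply i).continuous_pd j).mul ((hM.apply i).apply j).continuous
  · exact fun i _ => integrableOn_unitBox
      ((hV.apply i).continuous.mul (hM.apply i).continuous_dvg)

/-- With the continuity equation, this is the reason why convection conserves kinetic energy. -/
lemma integral_convection {ρ : (Fin d → ℝ) → ℝ} (hρ : TorusC1 ρ) (hV : TorusC1 V) :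
    ∫ x in unitBox d, ∑ i, V x i * dvgM (fun y i j => ρ y * V y i * V y j) x i
      = (∫ x in unitBox d, (∑ i, V x i ^ 2) * dvg (fun y => ρ y • V y) x) / 2 := by
  have hV2 : TorusC1 fun x => ∑ i, V x i ^ 2 := by
    simp only [pow_two]
    exact sum fun i _ => (hV.apply i).mul (hV.apply i)
  have transport (x : Fin d → ℝ) : ∑ j, (ρ x • V x) j * grad (fun y => ∑ i, V y i ^ 2) x j
      = 2 * ∑ i, ∑ j, jac V x i j * (ρ x * V x i * V x j) := by
    rw [Finset.sum_comm]
    simp only [grad_sum_sq (hV.differentiableAt x), Finset.mul_sum, Pi.smul_apply, smul_eq_mul]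
    exact Finset.sum_congr rfl fun j _ => Finset.sum_congr rfl fun i _ => by ring
  have h := (hρ.smul hV).integral_sum_mul_grad hV2
  simp only [transport, integral_const_mul] at h
  rw [hV.integral_sum_mul_dvgM (hρ.momentumFlux hV)]
  linarith

lemma integral_viscosity {a : (Fin d → ℝ) → ℝ} (ha : TorusC1 a) (hV : TorusC1 V)
    (hD : TorusC1 (symD V)) :
    ∫ x in unitBox d, ∑ i, V x i * dvgM (fun y i j => a y * symD V y i j) x i
      = -∫ x in unitBox d, a x * ∑ i, ∑ j, symD V x i j ^ 2 := by
  refine (hV.integral_sum_mul_dvgM (ha.smul hD)).trans ?_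
  simp only [Pi.smul_apply, smul_eq_mul, mul_left_comm _ (a _), ← Finset.mul_sum,
    sum_jac_mul_symD]

lemma integral_deriv_comp_mul_dvg {ρ : (Fin d → ℝ) → ℝ} {e : ℝ → ℝ}
    (he : ContDiffOn ℝ 1 e (Set.Ioi 0)) (hρ : TorusC1 ρ) (hpos : ∀ x, 0 < ρ x)
    (hV : TorusC1 V) :
    ∫ x in unitBox d, deriv e (ρ x) * dvg (fun y => ρ y • V y) x
      = ∫ x in unitBox d, (ρ x * deriv e (ρ x) - e (ρ x)) * dvg V x := by
  have heρ : TorusC1 fun x => e (ρ x) := comp he hρ hpos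
  have he' : Continuous fun x => deriv e (ρ x) :=
    (he.continuousOn_deriv_of_isOpen isOpen_Ioi le_rfl).comp_continuous hρ.continuous hpos
  have pointwise (x : Fin d → ℝ) : dvg (fun y => e (ρ y) • V y) x
      = deriv e (ρ x) * dvg (fun y => ρ y • V y) x
        - (ρ x * deriv e (ρ x) - e (ρ x)) * dvg V x := by
    have he_diff : DifferentiableAt ℝ e (ρ x) :=
      (he.differentiableOn one_ne_zero).differentiableAt (Ioi_mem_nhds (hpos x))
    rw [dvg_smul (heρ.differentiableAt x) (hV.differentiableAt x),
      dvg_smul (hρ.differentiableAt x) (hV.differentiableAt x)]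
    simp only [grad, pd_comp he_diff (hρ.differentiableAt x), mul_left_comm _ (deriv e _),
      ← Finset.mul_sum]
    ring
  have h := (heρ.smul hV).integral_dvg_eq_zero
  simp only [pointwise] at h
  rw [integral_sub] at h
  · exact sub_eq_zero.1 h
  · exact integrableOn_unitBox (he'.mul (hρ.smul hV).continuous_dvg)
  · exact integrableOn_unitBox
      (((hρ.continuous.mul he').sub heρ.continuous).mul hV.continuous_dvg)

end TorusC1

end Torus

section Evolution

variable {d : ℕ} {E : Type*} [NormedAddCommGroup E] [NormedSpace ℝ E] {I : Set ℝ}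

/-- A smooth function on `I × T^d`, encoded as a time-dependent periodic field on `ℝ^d`. -/
structure SmoothEvolution (I : Set ℝ) (F : ℝ → (Fin d → ℝ) → E) : Prop where
  contDiffOn : ContDiffOn ℝ ∞ (Function.uncurry F) (I ×ˢ Set.univ)
  periodic : ∀ t ∈ I, SpacePeriodic (F t)

namespace SmoothEvolution

variable {f g : ℝ → (Fin d → ℝ) → ℝ} {F : ℝ → (Fin d → ℝ) → E} {V : ℝ → (Fin d → ℝ) → Fin d → ℝ}
  {t : ℝ}

lemma congr {F₁ : ℝ → (Fin d → ℝ) → E} (hF : SmoothEvolution I F)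
    (h : ∀ t ∈ I, ∀ x, F₁ t x = F t x) : SmoothEvolution I F₁ :=
  ⟨hF.contDiffOn.congr fun p hp => h p.1 hp.1 p.2,
    fun t ht => by rw [funext (h t ht)]; exact hF.periodic t ht⟩

lemma apply {ι : Type*} [Fintype ι] {W : ℝ → (Fin d → ℝ) → ι → E} (hW : SmoothEvolution I W)
    (i : ι) : SmoothEvolution I fun t x => W t x i :=
  ⟨contDiffOn_pi.1 hW.contDiffOn i, fun t ht x n => congrFun (hW.periodic t ht x n) i⟩

lemma pi {ι : Type*} [Fintype ι] {W : ℝ → (Fin d → ℝ) → ι → E}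
    (hW : ∀ i, SmoothEvolution I fun t x => W t x i) : SmoothEvolution I W :=
  ⟨contDiffOn_pi.2 fun i => (hW i).contDiffOn,
    fun t ht x n => funext fun i => (hW i).periodic t ht x n⟩

lemma const (c : E) : SmoothEvolution I fun (_ : ℝ) (_ : Fin d → ℝ) => c :=
  ⟨contDiffOn_const, fun _ _ _ _ => rfl⟩

lemma add {G : ℝ → (Fin d → ℝ) → E} (hF : SmoothEvolution I F) (hG : SmoothEvolution I G) :
    SmoothEvolution I fun t x => F t x + G t x :=
  ⟨hF.contDiffOn.add hG.contDiffOn,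
    fun t ht x n => by simp only [hF.periodic t ht x n, hG.periodic t ht x n]⟩

lemma smul (hf : SmoothEvolution I f) (hF : SmoothEvolution I F) :
    SmoothEvolution I fun t x => f t x • F t x :=
  ⟨hf.contDiffOn.smul hF.contDiffOn,
    fun t ht x n => by simp only [hf.periodic t ht x n, hF.periodic t ht x n]⟩

lemma mul (hf : SmoothEvolution I f) (hg : SmoothEvolution I g) :
    SmoothEvolution I fun t x => f t x * g t x :=
  hf.smul hg

lemma sum {ι : Type*} {s : Finset ι} {G : ι → ℝ → (Fin d → ℝ) → E}
    (hG : ∀ i ∈ s, SmoothEvolution I (G i)) : SmoothEvolution I fun t x => ∑ i ∈ s, G i t x :=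
  ⟨ContDiffOn.sum fun i hi => (hG i hi).contDiffOn,
    fun t ht x n => Finset.sum_congr rfl fun i hi => (hG i hi).periodic t ht x n⟩

lemma sum_sq (hV : SmoothEvolution I V) : SmoothEvolution I fun t x => ∑ i, V t x i ^ 2 := by
  simp only [pow_two]
  exact sum fun i _ => (hV.apply i).mul (hV.apply i)

lemma comp {φ : ℝ → ℝ} (hφ : ContDiffOn ℝ ∞ φ (Set.Ioi 0)) (hf : SmoothEvolution I f)
    (hpos : ∀ t ∈ I, ∀ x, 0 < f t x) : SmoothEvolution I fun t x => φ (f t x) :=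
  ⟨hφ.comp hf.contDiffOn fun p hp => hpos p.1 hp.1 p.2,
    fun t ht x n => by simp only [hf.periodic t ht x n]⟩

lemma torusC1 (hF : SmoothEvolution I F) (ht : t ∈ I) : TorusC1 (F t) :=
  ⟨(hF.contDiffOn.comp_contDiff (contDiff_prodMk_right t) fun _ => ⟨ht, trivial⟩).of_le
    (mod_cast le_top), hF.periodic t ht⟩

lemma contDiffAt (hF : SmoothEvolution I F) (hI : IsOpen I) (ht : t ∈ I) (x : Fin d → ℝ) :
    ContDiffAt ℝ ∞ (Function.uncurry F) (t, x) :=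
  hF.contDiffOn.contDiffAt ((hI.prod isOpen_univ).mem_nhds ⟨ht, trivial⟩)

lemma hasFDerivAt (hF : SmoothEvolution I F) (hI : IsOpen I) (ht : t ∈ I) (x : Fin d → ℝ) :
    HasFDerivAt (Function.uncurry F) (fderiv ℝ (Function.uncurry F) (t, x)) (t, x) :=
  ((hF.contDiffAt hI ht x).differentiableAt (by simp)).hasFDerivAt

lemma hasDerivAt_fderiv_uncurry (hF : SmoothEvolution I F) (hI : IsOpen I) (ht : t ∈ I)
    (x : Fin d → ℝ) :
    HasDerivAt (fun s => F s x) (fderiv ℝ (Function.uncurry F) (t, x) (1, 0)) t :=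
  HasFDerivAt.comp_hasDerivAt (l := Function.uncurry F) t (hF.hasFDerivAt hI ht x)
    ((hasDerivAt_id t).prodMk (hasDerivAt_const t x))

lemma hasDerivAt (hF : SmoothEvolution I F) (hI : IsOpen I) (ht : t ∈ I) (x : Fin d → ℝ) :
    HasDerivAt (fun s => F s x) (deriv (fun s => F s x) t) t :=
  (hF.hasDerivAt_fderiv_uncurry hI ht x).differentiableAt.hasDerivAt

lemma pd_eq_fderiv_uncurry (hf : SmoothEvolution I f) (hI : IsOpen I) (ht : t ∈ I)
    (x : Fin d → ℝ) (i : Fin d) :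
    pd i (f t) x = fderiv ℝ (Function.uncurry f) (t, x) (0, Pi.single i 1) :=
  DFunLike.congr_fun
    ((hf.hasFDerivAt hI ht x).comp x (hasFDerivAt_prodMk_right t x)).fderiv _

lemma contDiffOn_fderiv_uncurry (hF : SmoothEvolution I F) (hI : IsOpen I)
    (v : ℝ × (Fin d → ℝ)) :
    ContDiffOn ℝ ∞ (fun p => fderiv ℝ (Function.uncurry F) p v) (I ×ˢ Set.univ) :=
  (hF.contDiffOn.fderiv_of_isOpen (hI.prod isOpen_univ) (by simp)).clm_apply contDiffOn_const

protected lemma pd (hf : SmoothEvolution I f) (hI : IsOpen I) (i : Fin d) :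
    SmoothEvolution I fun t => pd i (f t) :=
  ⟨(hf.contDiffOn_fderiv_uncurry hI _).congr fun p hp =>
    hf.pd_eq_fderiv_uncurry hI hp.1 p.2 i, fun t ht => (hf.periodic t ht).pd i⟩

protected lemma grad (hf : SmoothEvolution I f) (hI : IsOpen I) :
    SmoothEvolution I fun t => grad (f t) :=
  pi fun i => hf.pd hI i

protected lemma dvg (hV : SmoothEvolution I V) (hI : IsOpen I) :
    SmoothEvolution I fun t => dvg (V t) :=
  sum fun i _ => (hV.apply i).pd hI i

protected lemma symD (hV : SmoothEvolution I V) (hI : IsOpen I) :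
    SmoothEvolution I fun t => symD (V t) := by
  refine pi fun i => pi fun j => ?_
  have hij := ((hV.apply i).pd hI j).add ((hV.apply j).pd hI i)
  exact (hij.mul (const 2⁻¹)).congr fun t _ x => div_eq_mul_inv _ _

lemma timeDeriv (hF : SmoothEvolution I F) (hI : IsOpen I) :
    SmoothEvolution I fun t x => deriv (fun s => F s x) t :=
  ⟨(hF.contDiffOn_fderiv_uncurry hI _).congr fun p hp =>
    (hF.hasDerivAt_fderiv_uncurry hI hp.1 p.2).deriv, fun t ht x n =>
      Filter.EventuallyEq.deriv_eq <| by
        filter_upwards [hI.mem_nhds ht] with s hs using hF.periodic s hs x n⟩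

lemma deriv_pd (hf : SmoothEvolution I f) (hI : IsOpen I) (ht : t ∈ I) (x : Fin d → ℝ)
    (i : Fin d) : deriv (fun s => pd i (f s) x) t
      = pd i (fun y => deriv (fun s => f s y) t) x := by
  have second_fderiv (G : ℝ → (Fin d → ℝ) → ℝ) (v w : ℝ × (Fin d → ℝ))
      (hG : ∀ s ∈ I, ∀ y, G s y = fderiv ℝ (Function.uncurry f) (s, y) w) :
      fderiv ℝ (Function.uncurry G) (t, x) v
        = fderiv ℝ (fderiv ℝ (Function.uncurry f)) (t, x) v w := by
    have G_eventuallyEq : Function.uncurry G =ᶠ[nhds (t, x)]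
        fun p => fderiv ℝ (Function.uncurry f) p w := by
      filter_upwards [(hI.prod isOpen_univ).mem_nhds ⟨ht, trivial⟩] with p hp
      exact hG p.1 hp.1 p.2
    have differentiableAt_fderiv : DifferentiableAt ℝ (fderiv ℝ (Function.uncurry f)) (t, x) :=
      ((hf.contDiffAt hI ht x).fderiv_right (m := 1) (by norm_cast)).differentiableAt one_ne_zero
    rw [G_eventuallyEq.fderiv_eq, fderiv_clm_apply differentiableAt_fderiv (by fun_prop)]
    simp
  have symm : IsSymmSndFDerivAt ℝ (Function.uncurry f) (t, x) :=
    (hf.contDiffAt hI ht x).isSymmSndFDerivAt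
      (minSmoothness_of_isRCLikeNormedField.trans_le (WithTop.coe_le_coe.2 le_top))
  rw [((hf.pd hI i).hasDerivAt_fderiv_uncurry hI ht x).deriv,
    (hf.timeDeriv hI).pd_eq_fderiv_uncurry hI ht,
    second_fderiv _ _ _ fun s hs y => hf.pd_eq_fderiv_uncurry hI hs y i,
    second_fderiv _ _ _ fun s hs y => (hf.hasDerivAt_fderiv_uncurry hI hs y).deriv]
  exact symm _ _

lemma hasDerivAt_integral (hf : SmoothEvolution I f) (hI : IsOpen I) (ht : t ∈ I) :
    HasDerivAt (fun s => ∫ x in unitBox d, f s x)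
      (∫ x in unitBox d, deriv (fun s => f s x) t) t := by
  obtain ⟨δ, hδ, hball⟩ := Metric.nhds_basis_closedBall.mem_iff.1 (hI.mem_nhds ht)
  have hf' := hf.timeDeriv hI
  obtain ⟨C, hC⟩ := ((isCompact_closedBall t δ).prod isCompact_Icc).exists_bound_of_continuousOn
    (hf'.contDiffOn.continuousOn.mono
      (Set.prod_mono hball (Set.subset_univ (unitBox d))))
  refine (hasDerivAt_integral_of_dominated_loc_of_deriv_le (bound := fun _ => C)
    (F' := fun s x => deriv (fun s => f s x) s) (Metric.closedBall_mem_nhds t hδ) ?_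
    (integrableOn_unitBox (hf.torusC1 ht).continuous)
    (hf'.torusC1 ht).continuous.aestronglyMeasurable ?_
    (integrableOn_unitBox continuous_const) ?_).2
  · filter_upwards [hI.mem_nhds ht] with s hs
    exact (hf.torusC1 hs).continuous.aestronglyMeasurable
  · exact (ae_restrict_iff' measurableSet_Icc).2 <| .of_forall fun x hx s hs => hC (s, x) ⟨hs, hx⟩
  · exact .of_forall fun x s hs => hf.hasDerivAt hI (hball hs) x

end SmoothEvolution

end Evolution

section Capillarity

variable {d : ℕ} {k : ℝ → ℝ} {I : Set ℝ} {t : ℝ}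

/-- The vector field `k(ρ) ∇√ρ`, whose squared norm is the density of capillary energy. -/
def weightedGradSqrt (k : ℝ → ℝ) (ρ : (Fin d → ℝ) → ℝ) (x : Fin d → ℝ) : Fin d → ℝ :=
  k (ρ x) • grad (fun y => √(ρ y)) x

/-- The function `K = k(ρ) div(k(ρ) ∇√ρ) / √ρ`, for which `ρ ∇K` is the capillary force. It is
minus the variational derivative of `∫ |k(ρ) ∇√ρ|²` with respect to `ρ`. -/
def kortewegPotential (k : ℝ → ℝ) (ρ : (Fin d → ℝ) → ℝ) (x : Fin d → ℝ) : ℝ :=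
  k (ρ x) * dvg (weightedGradSqrt k ρ) x / √(ρ x)

lemma contDiffOn_sqrt_Ioi {n : WithTop ℕ∞} : ContDiffOn ℝ n (fun r : ℝ => √r) (Set.Ioi 0) :=
  fun _ hr => (contDiffAt_sqrt (ne_of_gt hr)).contDiffWithinAt

lemma contDiffOn_div_sqrt {n : WithTop ℕ∞} (hk : ContDiffOn ℝ n k (Set.Ioi 0)) :
    ContDiffOn ℝ n (fun r => k r / √r) (Set.Ioi 0) :=
  hk.div contDiffOn_sqrt_Ioi fun _ hr => (sqrt_pos.2 hr).ne'

lemma weightedGradSqrt_apply {ρ : (Fin d → ℝ) → ℝ} {x : Fin d → ℝ}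
    (hρ : DifferentiableAt ℝ ρ x) (hpos : 0 < ρ x) (i : Fin d) :
    weightedGradSqrt k ρ x i = k (ρ x) / √(ρ x) / 2 * pd i ρ x := by
  have hsqrt := hasDerivAt_sqrt hpos.ne'
  rw [weightedGradSqrt, Pi.smul_apply, grad, pd_comp hsqrt.differentiableAt hρ, hsqrt.deriv,
    smul_eq_mul]
  ring

namespace SmoothEvolution

variable {ρ : ℝ → (Fin d → ℝ) → ℝ}

protected lemma weightedGradSqrt (hk : ContDiffOn ℝ ∞ k (Set.Ioi 0)) (hρ : SmoothEvolution I ρ)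
    (hpos : ∀ t ∈ I, ∀ x, 0 < ρ t x) (hI : IsOpen I) :
    SmoothEvolution I fun t => weightedGradSqrt k (ρ t) :=
  (hρ.comp hk hpos).smul ((hρ.comp contDiffOn_sqrt_Ioi hpos).grad hI)

protected lemma kortewegPotential (hk : ContDiffOn ℝ ∞ k (Set.Ioi 0)) (hρ : SmoothEvolution I ρ)
    (hpos : ∀ t ∈ I, ∀ x, 0 < ρ t x) (hI : IsOpen I) :
    SmoothEvolution I fun t => kortewegPotential k (ρ t) :=
  ((hρ.comp (contDiffOn_div_sqrt hk) hpos).mul ((hρ.weightedGradSqrt hk hpos hI).dvg hI)).congr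
    fun _ _ _ => mul_div_right_comm _ _ _

lemma deriv_comp_mul_pd {m : ℝ → ℝ} (hm : ContDiffOn ℝ ∞ m (Set.Ioi 0))
    (hρ : SmoothEvolution I ρ) (hpos : ∀ t ∈ I, ∀ x, 0 < ρ t x) (hI : IsOpen I) (ht : t ∈ I)
    (x : Fin d → ℝ) (i : Fin d) :
    deriv (fun s => m (ρ s x) * pd i (ρ s) x) t
      = pd i (fun y => m (ρ t y) * deriv (fun s => ρ s y) t) x := by
  have hm_diff : DifferentiableAt ℝ m (ρ t x) :=
    (hm.differentiableOn (by simp)).differentiableAt (Ioi_mem_nhds (hpos t ht x))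
  have hρx := (hρ.torusC1 ht).differentiableAt x
  have hmρx : DifferentiableAt ℝ (fun y => m (ρ t y)) x := hm_diff.comp x hρx
  have hmρt : HasDerivAt (fun s => m (ρ s x)) _ t :=
    hm_diff.hasDerivAt.comp t (hρ.hasDerivAt hI ht x)
  rw [pd_mul hmρx (((hρ.timeDeriv hI).torusC1 ht).differentiableAt x), pd_comp hm_diff hρx,
    ← hρ.deriv_pd hI ht x i, (hmρt.fun_mul ((hρ.pd hI i).hasDerivAt hI ht x)).deriv]
  ring

/-- The right-hand side is a gradient because `k(ρ) ∇√ρ` is itself the gradient of a function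
of `ρ`. -/
lemma deriv_weightedGradSqrt (hk : ContDiffOn ℝ ∞ k (Set.Ioi 0)) (hρ : SmoothEvolution I ρ)
    (hpos : ∀ t ∈ I, ∀ x, 0 < ρ t x) (hI : IsOpen I) (ht : t ∈ I) (x : Fin d → ℝ) (i : Fin d) :
    deriv (fun s => weightedGradSqrt k (ρ s) x i) t
      = grad (fun y => k (ρ t y) / √(ρ t y) / 2 * deriv (fun s => ρ s y) t) x i := by
  have chain_rule : (fun s => weightedGradSqrt k (ρ s) x i) =ᶠ[nhds t]
      fun s => k (ρ s x) / √(ρ s x) / 2 * pd i (ρ s) x := by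
    filter_upwards [hI.mem_nhds ht] with s hs
    exact weightedGradSqrt_apply ((hρ.torusC1 hs).differentiableAt x) (hpos s hs x) i
  rw [chain_rule.deriv_eq]
  exact hρ.deriv_comp_mul_pd ((contDiffOn_div_sqrt hk).div_const 2) hpos hI ht x i

lemma hasDerivAt_sum_sq {V : ℝ → (Fin d → ℝ) → Fin d → ℝ} (hV : SmoothEvolution I V)
    (hI : IsOpen I) (ht : t ∈ I) (x : Fin d → ℝ) :
    HasDerivAt (fun s => ∑ i, V s x i ^ 2) (2 * ∑ i, V t x i * deriv (fun s => V s x i) t) t := by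
  rw [Finset.mul_sum]
  refine HasDerivAt.fun_sum fun i _ => (((hV.apply i).hasDerivAt hI ht x).fun_pow 2).congr_deriv ?_
  push_cast
  ring

lemma hasDerivAt_integral_kinetic {V : ℝ → (Fin d → ℝ) → Fin d → ℝ} (hρ : SmoothEvolution I ρ)
    (hV : SmoothEvolution I V) (hI : IsOpen I) (ht : t ∈ I) :
    HasDerivAt (fun s => ∫ x in unitBox d, ρ s x * (∑ i, V s x i ^ 2) / 2)
      ((∫ x in unitBox d, ∑ i, V t x i * deriv (fun s => ρ s x * V s x i) t)
        - (∫ x in unitBox d, (∑ i, V t x i ^ 2) * deriv (fun s => ρ s x) t) / 2) t := by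
  have hρV (i : Fin d) := hρ.mul (hV.apply i)
  have pointwise (x : Fin d → ℝ) : deriv (fun s => ρ s x * ∑ i, V s x i ^ 2) t
      = 2 * (∑ i, V t x i * deriv (fun s => ρ s x * V s x i) t)
        - (∑ i, V t x i ^ 2) * deriv (fun s => ρ s x) t := by
    have product_rule (i : Fin d) : deriv (fun s => ρ s x * V s x i) t
        = deriv (fun s => ρ s x) t * V t x i + ρ t x * deriv (fun s => V s x i) t :=
      ((hρ.hasDerivAt hI ht x).fun_mul ((hV.apply i).hasDerivAt hI ht x)).deriv
    rw [((hρ.hasDerivAt hI ht x).fun_mul (hV.hasDerivAt_sum_sq hI ht x)).deriv]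
    simp only [product_rule, Finset.mul_sum, Finset.sum_mul, ← Finset.sum_add_distrib,
      ← Finset.sum_sub_distrib]
    exact Finset.sum_congr rfl fun i _ => by ring
  simp only [integral_div]
  refine (((hρ.mul hV.sum_sq).hasDerivAt_integral hI ht).div_const 2).congr_deriv ?_
  simp only [pointwise]
  rw [integral_sub, integral_const_mul]
  · ring
  · exact integrableOn_unitBox <| continuous_const.mul <| continuous_finsetSum _ fun i _ =>
      ((hV.apply i).torusC1 ht).continuous.mul (((hρV i).timeDeriv hI).torusC1 ht).continuous
  · exact integrableOn_unitBox ((hV.sum_sq.mul (hρ.timeDeriv hI)).torusC1 ht).continuous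

lemma hasDerivAt_integral_sum_sq_weightedGradSqrt (hk : ContDiffOn ℝ ∞ k (Set.Ioi 0))
    (hρ : SmoothEvolution I ρ) (hpos : ∀ t ∈ I, ∀ x, 0 < ρ t x) (hI : IsOpen I) (ht : t ∈ I) :
    HasDerivAt (fun s => ∫ x in unitBox d, ∑ i, weightedGradSqrt k (ρ s) x i ^ 2)
      (-∫ x in unitBox d, kortewegPotential k (ρ t) x * deriv (fun s => ρ s x) t) t := by
  have hQ := hρ.weightedGradSqrt hk hpos hI
  have hφ : SmoothEvolution I fun t x => k (ρ t x) / √(ρ t x) / 2 * deriv (fun s => ρ s x) t :=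
    (hρ.comp ((contDiffOn_div_sqrt hk).div_const 2) hpos).mul (hρ.timeDeriv hI)
  refine (hQ.sum_sq.hasDerivAt_integral hI ht).congr_deriv ?_
  simp only [(hQ.hasDerivAt_sum_sq hI ht _).deriv, hρ.deriv_weightedGradSqrt hk hpos hI ht]
  rw [integral_const_mul, (hQ.torusC1 ht).integral_sum_mul_grad (hφ.torusC1 ht), mul_neg,
    ← integral_const_mul]
  congr 2 with x
  rw [kortewegPotential]
  ring

end SmoothEvolution

end Capillarity

section KortewegSystem

variable {d : ℕ} {I : Set ℝ} {a b k p q e : ℝ → ℝ} {ν κ t : ℝ} {ρ : ℝ → (Fin d → ℝ) → ℝ}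
  {u : ℝ → (Fin d → ℝ) → Fin d → ℝ}

/-- A smooth solution on `I × T^d`, without vacuum, of the Navier–Stokes–Korteweg system with
viscosities `a` and `b`, capillarity `k`, pressure `p` and damping `q`, all functions of the
density. -/
structure IsKortewegSol (I : Set ℝ) (a b k p q : ℝ → ℝ) (ν κ : ℝ) (ρ : ℝ → (Fin d → ℝ) → ℝ)
    (u : ℝ → (Fin d → ℝ) → Fin d → ℝ) : Prop where
  density : SmoothEvolution I ρ
  velocity : SmoothEvolution I u
  pos : ∀ t ∈ I, ∀ x, 0 < ρ t x
  continuity : ∀ t ∈ I, ∀ x, deriv (fun s => ρ s x) t + dvg (fun y => ρ t y • u t y) x = 0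
  momentum : ∀ t ∈ I, ∀ x i,
    deriv (fun s => ρ s x * u s x i) t
      + dvgM (fun y i j => ρ t y * u t y i * u t y j) x i
      + grad (fun y => p (ρ t y)) x i
      + q (ρ t x) * u t x i
    = 2 * ν * dvgM (fun y i j => a (ρ t y) * symD (u t) y i j) x i
      + 2 * ν * grad (fun y => b (ρ t y) * dvg (u t) y) x i
      + 2 * κ ^ 2 * ρ t x * grad (kortewegPotential k (ρ t)) x i

namespace IsKortewegSol

lemma dvg_smul_eq_neg_deriv (hsol : IsKortewegSol I a b k p q ν κ ρ u) (ht : t ∈ I)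
    (x : Fin d → ℝ) : dvg (fun y => ρ t y • u t y) x = -deriv (fun s => ρ s x) t :=
  eq_neg_of_add_eq_zero_right (hsol.continuity t ht x)

lemma sum_mul_deriv_momentum (hsol : IsKortewegSol I a b k p q ν κ ρ u) (ht : t ∈ I)
    (x : Fin d → ℝ) :
    ∑ i, u t x i * deriv (fun s => ρ s x * u s x i) t
      = 2 * ν * (∑ i, u t x i * dvgM (fun y i j => a (ρ t y) * symD (u t) y i j) x i)
        + 2 * ν * (∑ i, u t x i * grad (fun y => b (ρ t y) * dvg (u t) y) x i)
        + 2 * κ ^ 2 * (∑ i, (ρ t x • u t x) i * grad (kortewegPotential k (ρ t)) x i)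
        - ∑ i, u t x i * dvgM (fun y i j => ρ t y * u t y i * u t y j) x i
        - ∑ i, u t x i * grad (fun y => p (ρ t y)) x i
        - q (ρ t x) * ∑ i, u t x i ^ 2 := by
  simp only [Finset.mul_sum, ← Finset.sum_add_distrib, ← Finset.sum_sub_distrib, Pi.smul_apply,
    smul_eq_mul]
  exact Finset.sum_congr rfl fun i _ => by linear_combination u t x i * hsol.momentum t ht x i

lemma integral_sum_mul_deriv_momentum (ha : ContDiffOn ℝ ∞ a (Set.Ioi 0))
    (hb : ContDiffOn ℝ ∞ b (Set.Ioi 0)) (hk : ContDiffOn ℝ ∞ k (Set.Ioi 0))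
    (hp : ContDiffOn ℝ ∞ p (Set.Ioi 0)) (hq : ContinuousOn q (Set.Ioi 0))
    (hsol : IsKortewegSol I a b k p q ν κ ρ u) (hI : IsOpen I) (ht : t ∈ I) :
    ∫ x in unitBox d, ∑ i, u t x i * deriv (fun s => ρ s x * u s x i) t
      = (∫ x in unitBox d, (∑ i, u t x i ^ 2) * deriv (fun s => ρ s x) t) / 2
        + (∫ x in unitBox d, p (ρ t x) * dvg (u t) x)
        + 2 * κ ^ 2 * (∫ x in unitBox d, kortewegPotential k (ρ t) x * deriv (fun s => ρ s x) t)
        - 2 * ν * (∫ x in unitBox d, a (ρ t x) * ∑ i, ∑ j, symD (u t) x i j ^ 2)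
        - 2 * ν * (∫ x in unitBox d, b (ρ t x) * dvg (u t) x ^ 2)
        - ∫ x in unitBox d, q (ρ t x) * ∑ i, u t x i ^ 2 := by
  have ⟨hρ, hu, hpos, _, _⟩ := hsol
  have hρt := hρ.torusC1 ht
  have hut := hu.torusC1 ht
  have haρ := (hρ.comp ha hpos).torusC1 ht
  have hDu := (hu.symD hI).torusC1 ht
  have hpρ := (hρ.comp hp hpos).torusC1 ht
  have hbdiv := ((hρ.comp hb hpos).mul (hu.dvg hI)).torusC1 ht
  have hK := (hρ.kortewegPotential hk hpos hI).torusC1 ht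
  have convection := hρt.integral_convection hut
  have pressure := hut.integral_sum_mul_grad hpρ
  have shear := haρ.integral_viscosity hut hDu
  have bulk := hut.integral_sum_mul_grad hbdiv
  have capillarity := (hρt.smul hut).integral_sum_mul_grad hK
  simp only [hsol.dvg_smul_eq_neg_deriv ht, mul_neg, integral_neg] at convection capillarity
  have continuous_convection := hut.continuous_sum_mul_dvgM (hρt.momentumFlux hut)
  have continuous_pressure := hut.continuous_sum_mul_grad hpρ
  have continuous_shear : Continuous fun x =>
      ∑ i, u t x i * dvgM (fun y i j => a (ρ t y) * symD (u t) y i j) x i :=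
    hut.continuous_sum_mul_dvgM (haρ.smul hDu)
  have continuous_bulk := hut.continuous_sum_mul_grad hbdiv
  have continuous_capillarity := (hρt.smul hut).continuous_sum_mul_grad hK
  have continuous_damping : Continuous fun x => q (ρ t x) * ∑ i, u t x i ^ 2 :=
    (hq.comp_continuous hρt.continuous (hpos t ht)).mul (hu.sum_sq.torusC1 ht).continuous
  simp only [hsol.sum_mul_deriv_momentum ht]
  rw [integral_sub, integral_sub, integral_sub, integral_add, integral_add, integral_const_mul,
    integral_const_mul, integral_const_mul, shear, bulk, capillarity, convection, pressure]
  · simp only [pow_two, mul_assoc]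
    ring
  all_goals exact integrableOn_unitBox (by fun_prop)

lemma hasDerivAt_integral_internal (he : ContDiffOn ℝ ∞ e (Set.Ioi 0))
    (hpe : ∀ r, 0 < r → r * deriv e r - e r = p r) (hsol : IsKortewegSol I a b k p q ν κ ρ u)
    (hI : IsOpen I) (ht : t ∈ I) :
    HasDerivAt (fun s => ∫ x in unitBox d, e (ρ s x))
      (-∫ x in unitBox d, p (ρ t x) * dvg (u t) x) t := by
  have ⟨hρ, hu, hpos, _, _⟩ := hsol
  have pointwise (x : Fin d → ℝ) : deriv (fun s => e (ρ s x)) t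
      = -(deriv e (ρ t x) * dvg (fun y => ρ t y • u t y) x) := by
    have he_diff : DifferentiableAt ℝ e (ρ t x) :=
      (he.differentiableOn (by simp)).differentiableAt (Ioi_mem_nhds (hpos t ht x))
    rw [hsol.dvg_smul_eq_neg_deriv ht, mul_neg, neg_neg]
    exact (he_diff.hasDerivAt.comp t (hρ.hasDerivAt hI ht x)).deriv
  refine ((hρ.comp he hpos).hasDerivAt_integral hI ht).congr_deriv ?_
  simp only [pointwise, integral_neg]
  rw [TorusC1.integral_deriv_comp_mul_dvg (he.of_le (mod_cast le_top)) (hρ.torusC1 ht) (hpos t ht)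
    (hu.torusC1 ht)]
  simp only [hpe _ (hpos t ht _)]

end IsKortewegSol

theorem statement8_general (hI : IsOpen I) (ha : ContDiffOn ℝ ∞ a (Set.Ioi 0))
    (hb : ContDiffOn ℝ ∞ b (Set.Ioi 0)) (hk : ContDiffOn ℝ ∞ k (Set.Ioi 0))
    (hq : ContinuousOn q (Set.Ioi 0)) (he : ContDiffOn ℝ ∞ e (Set.Ioi 0))
    (hpe : ∀ r, 0 < r → r * deriv e r - e r = p r) (hsol : IsKortewegSol I a b k p q ν κ ρ u)
    (ht : t ∈ I) :
    HasDerivAt (fun s => ∫ x in unitBox d,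
        (ρ s x * (∑ i, u s x i ^ 2) / 2 + e (ρ s x)
          + 2 * κ ^ 2 * ∑ i, weightedGradSqrt k (ρ s) x i ^ 2))
      (-(2 * ν * ∫ x in unitBox d, a (ρ t x) * ∑ i, ∑ j, symD (u t) x i j ^ 2)
        - 2 * ν * (∫ x in unitBox d, b (ρ t x) * dvg (u t) x ^ 2)
        - ∫ x in unitBox d, q (ρ t x) * ∑ i, u t x i ^ 2) t := by
  have ⟨hρ, hu, hpos, _, _⟩ := hsol
  have hp : ContDiffOn ℝ ∞ p (Set.Ioi 0) :=
    ((contDiffOn_id.mul (he.deriv_of_isOpen isOpen_Ioi (by simp))).sub he).congr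
      fun r hr => (hpe r hr).symm
  have kinetic := hρ.hasDerivAt_integral_kinetic hu hI ht
  have internal := hsol.hasDerivAt_integral_internal he hpe hI ht
  have capillary := hρ.hasDerivAt_integral_sum_sq_weightedGradSqrt hk hpos hI ht
  refine (((kinetic.add internal).add (capillary.const_mul (2 * κ ^ 2))).congr_of_eventuallyEq
    ?_).congr_deriv ?_
  · filter_upwards [hI.mem_nhds ht] with s hs
    have int_kinetic := integrableOn_unitBox
      (((hρ.mul hu.sum_sq).torusC1 hs).continuous.div_const 2)
    have int_internal := integrableOn_unitBox ((hρ.comp he hpos).torusC1 hs).continuous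
    have int_capillary := integrableOn_unitBox
      ((hρ.weightedGradSqrt hk hpos hI).sum_sq.torusC1 hs).continuous
    rw [integral_add, integral_add, integral_const_mul]
    · rfl
    exacts [int_kinetic, int_internal, int_kinetic.add int_internal, int_capillary.const_mul _]
  · rw [hsol.integral_sum_mul_deriv_momentum ha hb hk hp hq hI ht]
    ring

end KortewegSystem

section QuantumNavierStokes

variable {ε γ ν κ : ℝ} {P F : ℝ → ℝ}

lemma contDiffOn_Ioi_of_hasDerivAt {φ φ' : ℝ → ℝ} (h : ∀ r, 0 < r → HasDerivAt φ (φ' r) r)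
    (hφ' : ContDiffOn ℝ ∞ φ' (Set.Ioi 0)) : ContDiffOn ℝ ∞ φ (Set.Ioi 0) :=
  (contDiffOn_infty_iff_deriv_of_isOpen isOpen_Ioi).2
    ⟨fun r hr => (h r hr).differentiableAt.differentiableWithinAt,
      hφ'.congr fun r hr => (h r hr).deriv⟩

lemma contDiffOn_rpow_const_Ioi (s : ℝ) {n : WithTop ℕ∞} :
    ContDiffOn ℝ n (fun r : ℝ => r ^ s) (Set.Ioi 0) :=
  fun _ hr => (contDiffAt_rpow_const_of_ne (ne_of_gt hr)).contDiffWithinAt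

lemma contDiffOn_hfun (ε γ : ℝ) : ContDiffOn ℝ ∞ (hfun ε γ) (Set.Ioi 0) :=
  (contDiffOn_id.add (contDiffOn_const.mul (contDiffOn_rpow_const_Ioi _))).add
    (contDiffOn_const.mul (contDiffOn_rpow_const_Ioi _))

lemma contDiffOn_deriv_hfun (ε γ : ℝ) : ContDiffOn ℝ ∞ (deriv (hfun ε γ)) (Set.Ioi 0) :=
  (contDiffOn_hfun ε γ).deriv_of_isOpen isOpen_Ioi (by simp)

lemma contDiffOn_gfun (ε γ : ℝ) : ContDiffOn ℝ ∞ (gfun ε γ) (Set.Ioi 0) :=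
  (contDiffOn_id.mul (contDiffOn_deriv_hfun ε γ)).sub (contDiffOn_hfun ε γ)

lemma contDiffOn_ptil (ε : ℝ) : ContDiffOn ℝ ∞ (ptil ε) (Set.Ioi 0) :=
  contDiffOn_const.mul ((contDiffOn_rpow_const_Ioi _).add (contDiffOn_rpow_const_Ioi _))

lemma IsPeps.contDiffOn (hP : IsPeps ε γ ν κ P) : ContDiffOn ℝ ∞ P (Set.Ioi 0) :=
  contDiffOn_Ioi_of_hasDerivAt hP <|
    ((contDiffOn_const.mul (contDiffOn_ptil ε)).mul (contDiffOn_deriv_hfun ε γ)).div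
      contDiffOn_id fun _ hr => ne_of_gt hr

/-- The equation `r F' - F = P` reads `(F / r)' = P / r ^ 2`. -/
lemma IsFeps.contDiffOn (hF : IsFeps P F) (hP : ContDiffOn ℝ ∞ P (Set.Ioi 0)) :
    ContDiffOn ℝ ∞ F (Set.Ioi 0) := by
  have quotient_hasDerivAt (r : ℝ) (hr : 0 < r) :
      HasDerivAt (fun s => F s / s) (P r / r ^ 2) r := by
    refine ((hF.1 r hr).hasDerivAt.fun_div (hasDerivAt_id' r) hr.ne').congr_deriv ?_
    rw [← hF.2 r hr, mul_comm r, mul_one]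
  have quotient_contDiffOn := contDiffOn_Ioi_of_hasDerivAt quotient_hasDerivAt <|
    hP.div (contDiffOn_id.pow 2) fun r hr => pow_ne_zero 2 (ne_of_gt hr)
  exact (quotient_contDiffOn.mul contDiffOn_id).congr fun r hr =>
    (div_mul_cancel₀ _ (ne_of_gt hr)).symm

lemma IsFeps.add_rpow (hF : IsFeps P F) (hγ : γ ≠ 1) :
    IsFeps (fun r => r ^ γ + P r) fun r => r ^ γ / (γ - 1) + F r := by
  have power (r : ℝ) (hr : 0 < r) :=
    (hasDerivAt_rpow_const (p := γ) (Or.inl hr.ne')).div_const (γ - 1)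
  refine ⟨fun r hr => (power r hr).differentiableAt.fun_add (hF.1 r hr), fun r hr => ?_⟩
  rw [((power r hr).fun_add (hF.1 r hr).hasDerivAt).deriv, rpow_sub_one hr.ne']
  have hγ' := sub_ne_zero.2 hγ
  have hFr := hF.2 r hr
  field_simp
  linear_combination (γ - 1) * hFr

lemma IsQNSSol.isKortewegSol {d : ℕ} {T : ℝ} {ρ : ℝ → (Fin d → ℝ) → ℝ}
    {u : ℝ → (Fin d → ℝ) → Fin d → ℝ} (hsol : IsQNSSol d ε γ ν κ T P ρ u) :
    IsKortewegSol (Set.Ioo 0 T) (hfun ε γ) (gfun ε γ) (deriv (hfun ε γ)) (fun r => r ^ γ + P r)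
      (ptil ε) ν κ ρ u := by
  have ⟨hρ, hu, hpos, hρ_periodic, hu_periodic, hcont, hmom⟩ := hsol
  have slab_subset : Set.Ioo 0 T ×ˢ (Set.univ : Set (Fin d → ℝ)) ⊆ Set.Icc 0 T ×ˢ Set.univ :=
    Set.prod_mono Set.Ioo_subset_Icc_self subset_rfl
  exact ⟨⟨hρ.mono slab_subset, fun t _ => hρ_periodic t⟩,
    ⟨hu.mono slab_subset, fun t _ => hu_periodic t⟩, fun t _ => hpos t, hcont, hmom⟩

end QuantumNavierStokes

theorem statement8 (d : ℕ) (hd : 1 ≤ d) (ε γ ν κ T : ℝ)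
    (hε : 0 < ε) (hγ : 1 < γ) (hκ : 0 < κ) (hνκ : κ < ν) (hT : 0 < T)
    (P F : ℝ → ℝ) (hP : IsPeps ε γ ν κ P) (hF : IsFeps P F)
    (ρ : ℝ → (Fin d → ℝ) → ℝ) (u : ℝ → (Fin d → ℝ) → (Fin d → ℝ))
    (hsol : IsQNSSol d ε γ ν κ T P ρ u) :
    ∀ t ∈ Set.Ioo 0 T,
      HasDerivAt (fun s => ∫ x in unitBox d,
          (ρ s x * (∑ i, u s x i ^ 2) / 2 + ρ s x ^ γ / (γ - 1) + F (ρ s x)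
            + 2 * κ ^ 2 *
              ∑ i, (deriv (hfun ε γ) (ρ s x) * grad (fun z => Real.sqrt (ρ s z)) x i) ^ 2))
        (-(2 * ν * ∫ x in unitBox d, hfun ε γ (ρ t x) * ∑ i, ∑ j, symD (u t) x i j ^ 2)
          - 2 * ν * (∫ x in unitBox d, gfun ε γ (ρ t x) * dvg (u t) x ^ 2)
          - ∫ x in unitBox d, ptil ε (ρ t x) * ∑ i, u t x i ^ 2) t := by
  intro t ht
  have hE := hF.add_rpow hγ.ne'
  have hE_smooth := hE.contDiffOn ((contDiffOn_rpow_const_Ioi γ).add hP.contDiffOn)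
  simpa only [add_assoc, weightedGradSqrt, Pi.smul_apply, smul_eq_mul] using
    statement8_general isOpen_Ioo (contDiffOn_hfun ε γ) (contDiffOn_gfun ε γ)
      (contDiffOn_deriv_hfun ε γ) (contDiffOn_ptil ε).continuousOn hE_smooth hE.2
      hsol.isKortewegSol ht

end
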